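/- (Factorisation, jump part.) Suppose that for every n ≥ 1 the polynomial functions Q^{(n)} : ℂ^n → ℂ, with Q^{(1)} ≡ 1, satisfy the single-cluster bulk and jump equations: for every n ≥ 2 the function v ↦ (K̃(v) + (n³−n)γ)·Q^{(n)}(v) + β·Σ_{n₁+n₂=n, n₁,n₂≥1} √(n₁n₂n)·Q^{(n₁)}(v₁,…,v_{n₁})·Q^{(n₂)}(v_{n₁+1},…,v_n) is 𝔓_{[1,n]}-reducible on ℂ^n, and for every n₁, n₂ ≥ 1 with n₁+n₂ = n the function v ↦ V_{n₁n₂}(v)·Q^{(n₁)}(v₁,…,v_{n₁})·Q^{(n₂)}(v_{n₁+1},…,v_n) + V_{n₂n₁}(v)·Q^{(n₂)}(v₁,…,v_{n₂})·Q^{(n₁)}(v_{n₂+1},…,v_n) + 2n₁n₂β_{n₁n₂}·Q^{(n)}(v) is 𝔓_{[1,n]}-reducible on ℂ^n. Then for every composition m = (m₁,…,m_N) of M, every 1 ≤ k ≤ N, every n₁, n₂ ≥ 1 with n₁+n₂ = m_k, and every x ∈ ℝ^N, the function v ↦ [ V_{n₁n₂}(w_k(v))·Q^{m'}(v) + V_{n₂n₁}(w_k(v))·Q^{m''}(v)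 + 2n₁n₂β_{n₁n₂}·Q^m(v) ] · exp(Σ_{j=1}^N ⟨w_j(v)⟩ x_j) is 𝔓_{[1,M]}-reducible on ℂ^M, where Q^m(v) = ∏_{j=1}^N Q^{(m_j)}(w_j(v)), m' = (m₁,…,m_{k−1}, n₁, n₂, m_{k+1},…,m_N), and m'' = (m₁,…,m_{k−1}, n₂, n₁, m_{k+1},…,m_N). -/

import Mathlib

open scoped BigOperators

/-- The cubic polynomial `P(v) = v³ + 12γv − 4β²`. -/
noncomputable def Pcub (β γ v : ℂ) : ℂ := v ^ 3 + 12 * γ * v - 4 * β ^ 2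

/-- `ℙ_{[a,b]}(v) = ∏_{a ≤ j < k ≤ b} P(v_k − v_j)` (indices 1-based). -/
noncomputable def Pprod (β γ : ℂ) (M a b : ℕ) (v : Fin M → ℂ) : ℂ :=
  ∏ j : Fin M, ∏ k : Fin M,
    if a ≤ j.val + 1 ∧ j < k ∧ k.val + 1 ≤ b then Pcub β γ (v k - v j) else 1

/- `(𝔓_{[a,b]} g)(v) = Σ_{𝔰 ∈ 𝔖_{[a,b]}} sgn(𝔰) ℙ_{[a,b]}(𝔰·v) g(𝔰·v)`: the
sum runs over permutations fixing every (1-based) index outside `[a,b]`, and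
`(𝔰·v)_j = v_{𝔰(j)}`. -/
open Classical in
noncomputable def Pop (β γ : ℂ) (M a b : ℕ) (g : (Fin M → ℂ) → ℂ) (v : Fin M → ℂ) : ℂ :=
  ∑ s : Equiv.Perm (Fin M),
    if ∀ i : Fin M, ¬ (a ≤ i.val + 1 ∧ i.val + 1 ≤ b) → s i = i then
      ((Equiv.Perm.sign s : ℤ) : ℂ) * Pprod β γ M a b (v ∘ s) * g (v ∘ s)
    else 0

/-- `g` is `𝔓_{[a,b]}`-reducible if `𝔓_{[a,b]} g ≡ 0`. -/
def PReducible (β γ : ℂ) (M a b : ℕ) (g : (Fin M → ℂ) → ℂ) : Prop :=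
  ∀ v : Fin M → ℂ, Pop β γ M a b g v = 0

/-- The segment `(v_{a+1}, …, v_{a+len})` of a vector `v ∈ ℂ^M` (0-based start `a`);
out-of-range entries (never used below) default to `0`. -/
noncomputable def seg (M a len : ℕ) (v : Fin M → ℂ) : Fin len → ℂ :=
  fun i => if h : a + i.val < M then v ⟨a + i.val, h⟩ else 0

/-- `⟨w⟩ = Σ_i w_i`. -/
noncomputable def sumv {k : ℕ} (w : Fin k → ℂ) : ℂ := ∑ i, w i

/-- `K̃(w) = Σ_i w_i² − (Σ_i w_i)²/k`, the reduced kinetic energy of a cluster. -/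
noncomputable def Ktilde (k : ℕ) (w : Fin k → ℂ) : ℂ :=
  (∑ i, w i ^ 2) - (∑ i, w i) ^ 2 / (k : ℂ)

/-- `V_{n₁n₂}(u) = n₂(u₁+⋯+u_{n₁}) − n₁(u_{n₁+1}+⋯+u_{n₁+n₂})` for `u ∈ ℂ^k`
(`k = n₁ + n₂` in all uses). -/
noncomputable def Vseg (n₁ n₂ k : ℕ) (u : Fin k → ℂ) : ℂ :=
  (n₂ : ℂ) * sumv (seg k 0 n₁ u) - (n₁ : ℂ) * sumv (seg k n₁ n₂ u)

/-- `β_{n₁n₂} = β·√(n₁ n₂ (n₁+n₂))`. -/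
noncomputable def betaC (β : ℂ) (n₁ n₂ : ℕ) : ℂ :=
  β * (Real.sqrt ((n₁ : ℝ) * (n₂ : ℝ) * ((n₁ : ℝ) + (n₂ : ℝ))) : ℂ)

/-- `Q^m(v) = ∏_j Q^{(m_j)}(w_j(v))`, the factorised Ansatz attached to the
composition `m = (m₁, …, m_N)`, where `w_j(v)` is the `j`-th consecutive cluster
of `v` of size `m_j`. -/
noncomputable def Qm (Q : (n : ℕ) → (Fin n → ℂ) → ℂ) (M : ℕ) (m : List ℕ)
    (v : Fin M → ℂ) : ℂ :=
  ∏ j : Fin m.length, Q (m.get j) (seg M ((m.take j.val).sum) (m.get j) v)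

/-- The exponential factor `exp(Σ_j ⟨w_j(v)⟩ x_j)`. -/
noncomputable def expFactor (M : ℕ) (m : List ℕ) (x : Fin m.length → ℝ)
    (v : Fin M → ℂ) : ℂ :=
  Complex.exp (∑ j : Fin m.length,
    sumv (seg M ((m.take j.val).sum) (m.get j) v) * (x j : ℂ))

/-!
Writing `𝔖_{[a',b']}` as a union of left cosets of `𝔖_{[a,b]}`, where `[a,b] ⊆ [a',b']`, exhibits
`𝔓_{[a',b']} g` as a combination of values of `𝔓_{[a,b]} g`: the factors of `ℙ_{[a',b']}` whose
indices do not both lie in `[a,b]` are permuted among themselves by `𝔖_{[a,b]}`, because a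
permutation of a block of consecutive indices does not change the order of an index outside the
block relative to those inside it. Hence reducibility on a block implies reducibility on `[1,M]`.
In the expression attached to the cluster `k`, the other clusters and the exponential are
invariant under the permutations of the variables of that cluster, and what multiplies them is the
single-cluster jump expression.
-/

theorem sum_subgroup_eq_zero_of_coset_sums {G A : Type*} [Group G] [AddCommMonoid A]
    {H K : Subgroup G} [Fintype H] [Fintype K] (hHK : H ≤ K) {F : G → A}
    (hF : ∀ g ∈ K, ∑ h : H, F (g * h) = 0) : ∑ g : K, F g = 0 := by
  classical
  obtain ⟨S, hS, -⟩ := (H.subgroupOf K).exists_isComplement_left 1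
  rw [← Function.Bijective.sum_comp hS fun g : K => F g, Fintype.sum_prod_type]
  refine Finset.sum_eq_zero fun g _ => ?_
  rw [← hF g g.1.2]
  exact (Subgroup.subgroupOfEquivOfLe hHK).toEquiv.sum_comp fun h : H => F (g * h)

theorem sum_take_add_get_le {l : List ℕ} (j : Fin l.length) {i : ℕ} (h : j.val < i) :
    (l.take j).sum + l.get j ≤ (l.take i).sum := by
  rw [List.get_eq_getElem, ← List.sum_take_succ l j.val j.isLt]
  exact (List.take_sublist_take_left (l := l) h).sum_le_sum fun _ _ => Nat.zero_le _

theorem sum_take_add_get_le_sum {l : List ℕ} (j : Fin l.length) :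
    (l.take j).sum + l.get j ≤ l.sum := by
  simpa only [List.take_length] using sum_take_add_get_le j j.isLt

section IntervalPermutations

/-- The index interval `{a, …, b}`, 1-based as in `Pop`, as a set of 0-based indices. -/
def indexInterval (M a b : ℕ) : Set (Fin M) :=
  {i | a ≤ i.val + 1 ∧ i.val + 1 ≤ b}

/-- The group `𝔖_{[a,b]}` of permutations fixing every index outside `{a, …, b}`. -/
def intervalPerm (M a b : ℕ) : Subgroup (Equiv.Perm (Fin M)) :=
  fixingSubgroup _ (indexInterval M a b)ᶜ

noncomputable instance (M a b : ℕ) : Fintype (intervalPerm M a b) :=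
  Fintype.ofFinite _

variable {M a b : ℕ} {s : Equiv.Perm (Fin M)}

theorem mem_indexInterval {i : Fin M} :
    i ∈ indexInterval M a b ↔ a ≤ i.val + 1 ∧ i.val + 1 ≤ b :=
  Iff.rfl

theorem mem_intervalPerm : s ∈ intervalPerm M a b ↔ ∀ i ∉ indexInterval M a b, s i = i :=
  mem_fixingSubgroup_iff _

theorem intervalPerm_mono {a' b' : ℕ} (ha : a' ≤ a) (hb : b ≤ b') :
    intervalPerm M a b ≤ intervalPerm M a' b' :=
  fixingSubgroup_antitone _ _ <| Set.compl_subset_compl.2 fun _ hi =>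
    ⟨ha.trans hi.1, hi.2.trans hb⟩

theorem apply_mem_indexInterval_iff (hs : s ∈ intervalPerm M a b) (i : Fin M) :
    s i ∈ indexInterval M a b ↔ i ∈ indexInterval M a b := by
  rw [mem_intervalPerm] at hs
  refine ⟨fun h => by_contra fun hi => hi (hs i hi ▸ h), fun hi => by_contra fun h => ?_⟩
  exact h ((s.injective (hs _ h)).symm ▸ hi)

/-- The bijection `i ↦ a + i` from `Fin n` onto the block of `n` indices that starts at the 0-based
position `a`. -/
def finEquivIndexInterval (M a n : ℕ) (h : a + n ≤ M) :
    Fin n ≃ indexInterval M (a + 1) (a + n) where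
  toFun i := ⟨⟨a + i, by omega⟩, mem_indexInterval.2 (by dsimp only; omega)⟩
  invFun j := ⟨j.1 - a, by have := mem_indexInterval.1 j.2; omega⟩
  left_inv i := by simp
  right_inv j := by
    have := mem_indexInterval.1 j.2
    ext
    dsimp only
    omega

open Classical in
/-- The transport of the permutations of `Fin n` to the block of `n` indices that starts at the
0-based position `a`. -/
noncomputable def permEquivIntervalPerm (M a n : ℕ) (h : a + n ≤ M) :
    Equiv.Perm (Fin n) ≃ intervalPerm M (a + 1) (a + n) :=
  (finEquivIndexInterval M a n h).permCongr.trans <|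
    (Equiv.Perm.subtypeEquivSubtypePerm (· ∈ indexInterval M (a + 1) (a + n))).trans <|
      Equiv.subtypeEquivRight fun _ => mem_intervalPerm.symm

theorem permEquivIntervalPerm_apply {n : ℕ} (h : a + n ≤ M) (t : Equiv.Perm (Fin n)) (i : Fin n) :
    (permEquivIntervalPerm M a n h t : Equiv.Perm (Fin M)) (finEquivIndexInterval M a n h i) =
      finEquivIndexInterval M a n h (t i) := by
  simp [permEquivIntervalPerm, Equiv.Perm.subtypeEquivSubtypePerm_apply_coe]

theorem sign_permEquivIntervalPerm {n : ℕ} (h : a + n ≤ M) (t : Equiv.Perm (Fin n)) :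
    Equiv.Perm.sign (permEquivIntervalPerm M a n h t : Equiv.Perm (Fin M)) =
      Equiv.Perm.sign t := by
  classical
  simp [permEquivIntervalPerm, Equiv.Perm.subtypeEquivSubtypePerm_apply_coe]

end IntervalPermutations

section Segments

variable {M a n : ℕ}

theorem seg_apply (h : a + n ≤ M) (v : Fin M → ℂ) (i : Fin n) :
    seg M a n v i = v (finEquivIndexInterval M a n h i) :=
  dif_pos (by omega)

theorem seg_seg {b l : ℕ} (h : b + l ≤ n) (v : Fin M → ℂ) :
    seg n b l (seg M a n v) = seg M (a + b) l v := by
  funext i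
  have : b + i.val < n := by omega
  simp [seg, this, add_assoc]

theorem seg_seg_tail {b l : ℕ} (v : Fin M → ℂ) :
    seg (M - a) b l (seg M a (M - a) v) = seg M (a + b) l v := by
  funext i
  by_cases h : a + b + i.val < M
  · simp [seg, h, show b + i.val < M - a by omega, ← add_assoc]
  · simp [seg, h, show ¬ b + i.val < M - a by omega]

theorem seg_zero_self (v : Fin M → ℂ) : seg M 0 M v = v := by
  funext i
  simp [seg]

theorem seg_comp_permEquivIntervalPerm (h : a + n ≤ M) (t : Equiv.Perm (Fin n))
    (v : Fin M → ℂ) :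
    seg M a n (v ∘ (permEquivIntervalPerm M a n h t : Equiv.Perm (Fin M))) = seg M a n v ∘ t := by
  funext i
  simp only [seg_apply h, Function.comp_apply, permEquivIntervalPerm_apply]

theorem sumv_seg_comp (h : a + n ≤ M) {s : Equiv.Perm (Fin M)}
    (hs : s ∈ intervalPerm M (a + 1) (a + n)) (v : Fin M → ℂ) :
    sumv (seg M a n (v ∘ s)) = sumv (seg M a n v) := by
  obtain ⟨t, ht⟩ := (permEquivIntervalPerm M a n h).surjective ⟨s, hs⟩
  obtain rfl : (permEquivIntervalPerm M a n h t : Equiv.Perm (Fin M)) = s := by rw [ht]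
  rw [seg_comp_permEquivIntervalPerm]
  exact Equiv.sum_comp t _

theorem seg_comp_of_disjoint {c d l : ℕ} {s : Equiv.Perm (Fin M)}
    (hs : s ∈ intervalPerm M c d) (h : a + l < c ∨ d ≤ a) (v : Fin M → ℂ) :
    seg M a l (v ∘ s) = seg M a l v := by
  funext i
  refine dite_congr rfl (fun hi => congrArg v ?_) fun _ => rfl
  refine mem_intervalPerm.1 hs _ ?_
  rw [mem_indexInterval]
  dsimp only
  omega

end Segments

section Reducibility

variable {β γ : ℂ} {M a b : ℕ}

theorem Pop_eq_sum_intervalPerm (g : (Fin M → ℂ) → ℂ) (v : Fin M → ℂ) :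
    Pop β γ M a b g v = ∑ s : intervalPerm M a b,
      ((Equiv.Perm.sign (s : Equiv.Perm (Fin M)) : ℤ) : ℂ) * Pprod β γ M a b (v ∘ s) *
        g (v ∘ s) := by
  classical
  rw [Pop, ← Finset.sum_filter]
  exact Finset.sum_subtype _ (fun s => by simp [mem_intervalPerm, mem_indexInterval]) _

/-- The pairs of indices `a ≤ j < k ≤ b` (1-based) over which `Pprod` multiplies. -/
def indexPairs (M a b : ℕ) : Finset (Fin M × Fin M) :=
  {p | a ≤ p.1.val + 1 ∧ p.1 < p.2 ∧ p.2.val + 1 ≤ b}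

theorem mem_indexPairs {p : Fin M × Fin M} :
    p ∈ indexPairs M a b ↔ a ≤ p.1.val + 1 ∧ p.1 < p.2 ∧ p.2.val + 1 ≤ b := by
  simp [indexPairs]

theorem indexPairs_mono {a' b' : ℕ} (ha : a' ≤ a) (hb : b ≤ b') :
    indexPairs M a b ⊆ indexPairs M a' b' := fun p hp => by
  rw [mem_indexPairs] at hp ⊢
  omega

theorem Pprod_eq_prod_indexPairs (v : Fin M → ℂ) :
    Pprod β γ M a b v = ∏ p ∈ indexPairs M a b, Pcub β γ (v p.2 - v p.1) := by
  rw [Pprod, indexPairs, Finset.prod_filter, ← Fintype.prod_prod_type']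

theorem Pprod_seg {n : ℕ} (h : a + n ≤ M) (v : Fin M → ℂ) :
    Pprod β γ n 1 n (seg M a n v) = Pprod β γ M (a + 1) (a + n) v := by
  let e := finEquivIndexInterval M a n h
  simp only [Pprod_eq_prod_indexPairs]
  refine Finset.prod_nbij (fun p => ((e p.1 : Fin M), (e p.2 : Fin M))) ?_ ?_ ?_ ?_
  · intro p hp
    rw [mem_indexPairs] at hp ⊢
    simp only [Fin.lt_def, e, finEquivIndexInterval, Equiv.coe_fn_mk] at hp ⊢
    omega
  · exact ((Subtype.val_injective.comp e.injective).prodMap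
      (Subtype.val_injective.comp e.injective)).injOn
  · rintro ⟨j, k⟩ hp
    obtain ⟨hj, hjk, hk⟩ : a + 1 ≤ j.val + 1 ∧ j.val < k.val ∧ k.val + 1 ≤ a + n :=
      mem_indexPairs.1 hp
    refine ⟨(e.symm ⟨j, hj, by omega⟩, e.symm ⟨k, by omega, hk⟩), mem_indexPairs.2 ?_, by simp⟩
    simp only [Fin.lt_def, e, finEquivIndexInterval, Equiv.coe_fn_symm_mk]
    omega
  · intro p _
    simp only [seg_apply h, e]

theorem mem_indexPairs_sdiff_iff {a' b' : ℕ} (ha : a' ≤ a) (hb : b ≤ b')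
    {s : Equiv.Perm (Fin M)} (hs : s ∈ intervalPerm M a b) (p : Fin M × Fin M) :
    (s p.1, s p.2) ∈ indexPairs M a' b' \ indexPairs M a b ↔
      p ∈ indexPairs M a' b' \ indexPairs M a b := by
  have h₁ := apply_mem_indexInterval_iff hs p.1
  have h₂ := apply_mem_indexInterval_iff hs p.2
  have h₁' := mem_intervalPerm.1 hs p.1
  have h₂' := mem_intervalPerm.1 hs p.2
  simp only [Finset.mem_sdiff, mem_indexPairs, mem_indexInterval, Fin.lt_def, Fin.ext_iff] at *
  omega

theorem prod_indexPairs_sdiff_comp {A : Type*} [CommMonoid A] {a' b' : ℕ} (ha : a' ≤ a)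
    (hb : b ≤ b') {s : Equiv.Perm (Fin M)} (hs : s ∈ intervalPerm M a b) (f : Fin M → Fin M → A) :
    ∏ p ∈ indexPairs M a' b' \ indexPairs M a b, f (s p.1) (s p.2) =
      ∏ p ∈ indexPairs M a' b' \ indexPairs M a b, f p.1 p.2 :=
  Finset.prod_equiv (s.prodCongr s) (fun p => (mem_indexPairs_sdiff_iff ha hb hs p).symm)
    fun _ _ => rfl

theorem PReducible.mono {a' b' : ℕ} {g : (Fin M → ℂ) → ℂ} (hg : PReducible β γ M a b g)
    (ha : a' ≤ a) (hb : b ≤ b') : PReducible β γ M a' b' g := by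
  intro v
  let outer (u : Fin M → ℂ) := ∏ p ∈ indexPairs M a' b' \ indexPairs M a b,
    Pcub β γ (u p.2 - u p.1)
  have hsplit (u : Fin M → ℂ) : Pprod β γ M a' b' u = outer u * Pprod β γ M a b u := by
    simp only [outer, Pprod_eq_prod_indexPairs, Finset.prod_sdiff (indexPairs_mono ha hb)]
  have houter (u : Fin M → ℂ) (t : intervalPerm M a b) : outer (u ∘ t) = outer u :=
    prod_indexPairs_sdiff_comp ha hb t.2 fun j k => Pcub β γ (u k - u j)
  rw [Pop_eq_sum_intervalPerm]
  refine sum_subgroup_eq_zero_of_coset_sums (intervalPerm_mono ha hb)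
    (F := fun s : Equiv.Perm (Fin M) =>
      ((Equiv.Perm.sign s : ℤ) : ℂ) * Pprod β γ M a' b' (v ∘ s) * g (v ∘ s))
    fun s _ => ?_
  calc ∑ t : intervalPerm M a b, ((Equiv.Perm.sign (s * (t : Equiv.Perm (Fin M))) : ℤ) : ℂ) *
        Pprod β γ M a' b' (v ∘ ⇑(s * (t : Equiv.Perm (Fin M)))) *
        g (v ∘ ⇑(s * (t : Equiv.Perm (Fin M))))
      = ((Equiv.Perm.sign s : ℤ) : ℂ) * outer (v ∘ s) * Pop β γ M a b g (v ∘ s) := by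
        rw [Pop_eq_sum_intervalPerm, Finset.mul_sum]
        refine Finset.sum_congr rfl fun t _ => ?_
        rw [Equiv.Perm.coe_mul, ← Function.comp_assoc, hsplit, houter, Equiv.Perm.sign_mul]
        push_cast
        ring
    _ = 0 := by rw [hg, mul_zero]

theorem PReducible.mul_of_symmetric {g R : (Fin M → ℂ) → ℂ} (hg : PReducible β γ M a b g)
    (hR : ∀ s ∈ intervalPerm M a b, ∀ v, R (v ∘ s) = R v) :
    PReducible β γ M a b fun v => g v * R v := by
  intro v
  have hv := hg v
  rw [Pop_eq_sum_intervalPerm] at hv ⊢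
  simp only [fun s : intervalPerm M a b => hR s s.2, ← mul_assoc]
  rw [← Finset.sum_mul, hv, zero_mul]

theorem PReducible.comp_seg {n : ℕ} {g : (Fin n → ℂ) → ℂ} (hg : PReducible β γ n 1 n g)
    (h : a + n ≤ M) : PReducible β γ M (a + 1) (a + n) fun v => g (seg M a n v) := by
  intro v
  rw [← hg (seg M a n v), Pop_eq_sum_intervalPerm, ← (permEquivIntervalPerm M a n h).sum_comp]
  refine Finset.sum_congr rfl fun t _ => ?_
  rw [if_pos fun i hi => absurd ⟨by omega, i.isLt⟩ hi, sign_permEquivIntervalPerm,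
    ← Pprod_seg h, seg_comp_permEquivIntervalPerm]

end Reducibility

section Factorisation

variable (Q : (n : ℕ) → (Fin n → ℂ) → ℂ)

theorem Qm_nil (M : ℕ) (v : Fin M → ℂ) : Qm Q M [] v = 1 := by
  simp [Qm]

theorem Qm_cons (M n : ℕ) (l : List ℕ) (v : Fin M → ℂ) :
    Qm Q M (n :: l) v = Q n (seg M 0 n v) * Qm Q (M - n) l (seg M n (M - n) v) := by
  rw [Qm, Qm]
  simp only [List.length_cons]
  rw [Fin.prod_univ_succ]
  simp only [seg_seg_tail]
  rfl

theorem Qm_singleton (n : ℕ) (v : Fin n → ℂ) : Qm Q n [n] v = Q n v := by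
  rw [Qm_cons, Qm_nil, seg_zero_self, mul_one]

theorem Qm_pair (M p q : ℕ) (v : Fin M → ℂ) :
    Qm Q M [p, q] v = Q p (seg M 0 p v) * Q q (seg M p q v) := by
  rw [Qm_cons, Qm_cons, Qm_nil, seg_seg_tail, add_zero, mul_one]

theorem Qm_append (M : ℕ) (l r : List ℕ) (v : Fin M → ℂ) :
    Qm Q M (l ++ r) v = Qm Q M l v * Qm Q (M - l.sum) r (seg M l.sum (M - l.sum) v) := by
  induction l generalizing M with
  | nil => simp [Qm_nil, seg_zero_self]
  | cons n l ih =>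
    simp only [List.cons_append, Qm_cons, ih, seg_seg_tail, List.sum_cons, mul_assoc]
    rw [Nat.sub_sub]

theorem Qm_comp_of_sum_lt {M c d : ℕ} {s : Equiv.Perm (Fin M)} (hs : s ∈ intervalPerm M c d)
    {l : List ℕ} (h : l.sum < c) (v : Fin M → ℂ) : Qm Q M l (v ∘ s) = Qm Q M l v := by
  refine Finset.prod_congr rfl fun j _ => ?_
  rw [seg_comp_of_disjoint hs (Or.inl ?_)]
  have := sum_take_add_get_le_sum j
  omega

theorem Qm_seg {M a n : ℕ} {l : List ℕ} (h : l.sum ≤ n) (v : Fin M → ℂ) :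
    Qm Q n l (seg M a n v) = Qm Q l.sum l (seg M a l.sum v) := by
  refine Finset.prod_congr rfl fun j _ => ?_
  have hj := sum_take_add_get_le_sum j
  rw [seg_seg hj, seg_seg (hj.trans h)]

/-- The clusters of `Q^m` outside a block of `n` consecutive variables: `l` lists the sizes of the
clusters before the block, `r` those after it. -/
noncomputable def Qspectator {M : ℕ} (l r : List ℕ) (n : ℕ) (v : Fin M → ℂ) : ℂ :=
  Qm Q M l v * Qm Q (M - (l.sum + n)) r (seg M (l.sum + n) (M - (l.sum + n)) v)

theorem Qm_append_append {M n : ℕ} {l ns : List ℕ} (hns : ns.sum = n) (h : l.sum + n ≤ M)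
    (r : List ℕ) (v : Fin M → ℂ) :
    Qm Q M (l ++ ns ++ r) v = Qm Q n ns (seg M l.sum n v) * Qspectator Q l r n v := by
  subst hns
  rw [Qspectator, Qm_append, Qm_append, Qm_seg Q (by omega), List.sum_append]
  ring

theorem Qspectator_comp {M n : ℕ} {l : List ℕ} {s : Equiv.Perm (Fin M)}
    (hs : s ∈ intervalPerm M (l.sum + 1) (l.sum + n)) (r : List ℕ) (v : Fin M → ℂ) :
    Qspectator Q l r n (v ∘ s) = Qspectator Q l r n v := by
  rw [Qspectator, Qm_comp_of_sum_lt Q hs (Nat.lt_succ_self _),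
    seg_comp_of_disjoint hs (Or.inr le_rfl), Qspectator]

theorem expFactor_comp {M : ℕ} {m : List ℕ} (k : Fin m.length)
    (h : (m.take k).sum + m.get k ≤ M) {s : Equiv.Perm (Fin M)}
    (hs : s ∈ intervalPerm M ((m.take k).sum + 1) ((m.take k).sum + m.get k))
    (x : Fin m.length → ℝ) (v : Fin M → ℂ) :
    expFactor M m x (v ∘ s) = expFactor M m x v := by
  refine congrArg Complex.exp (Finset.sum_congr rfl fun j _ => congrArg (· * (x j : ℂ)) ?_)
  rcases lt_trichotomy j k with hjk | rfl | hjk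
  · rw [seg_comp_of_disjoint hs (Or.inl (Nat.lt_succ_of_le (sum_take_add_get_le j hjk)))]
  · exact sumv_seg_comp h hs v
  · rw [seg_comp_of_disjoint hs (Or.inr (sum_take_add_get_le k hjk))]

end Factorisation

theorem stmt_18_general {M : ℕ} {β γ : ℂ} (Q : (n : ℕ) → (Fin n → ℂ) → ℂ) {m : List ℕ}
    (hm : m.sum ≤ M) (k : Fin m.length) {n₁ n₂ : ℕ} (hn : n₁ + n₂ = m.get k)
    (hjump : PReducible β γ (n₁ + n₂) 1 (n₁ + n₂) (fun v =>
      Vseg n₁ n₂ (n₁ + n₂) v * Q n₁ (seg (n₁ + n₂) 0 n₁ v) * Q n₂ (seg (n₁ + n₂) n₁ n₂ v)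
        + Vseg n₂ n₁ (n₁ + n₂) v * Q n₂ (seg (n₁ + n₂) 0 n₂ v)
            * Q n₁ (seg (n₁ + n₂) n₂ n₁ v)
        + 2 * (n₁ : ℂ) * (n₂ : ℂ) * betaC β n₁ n₂ * Q (n₁ + n₂) v))
    (x : Fin m.length → ℝ) :
    PReducible β γ M 1 M (fun v =>
      (Vseg n₁ n₂ (m.get k) (seg M ((m.take k.val).sum) (m.get k) v)
          * Qm Q M (m.take k.val ++ [n₁, n₂] ++ m.drop (k.val + 1)) v
        + Vseg n₂ n₁ (m.get k) (seg M ((m.take k.val).sum) (m.get k) v)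
          * Qm Q M (m.take k.val ++ [n₂, n₁] ++ m.drop (k.val + 1)) v
        + 2 * (n₁ : ℂ) * (n₂ : ℂ) * betaC β n₁ n₂ * Qm Q M m v)
      * expFactor M m x v) := by
  have hk : (m.take k).sum + m.get k ≤ M := (sum_take_add_get_le_sum k).trans hm
  have hsplice {ns : List ℕ} (hns : ns.sum = m.get k) := Qm_append_append Q hns hk (m.drop (k + 1))
  have hm_split : m = m.take k ++ [m.get k] ++ m.drop (k + 1) := by simp
  rw [hn] at hjump
  have hred := ((hjump.comp_seg hk).mul_of_symmetric
    (R := fun v => Qspectator Q (m.take k) (m.drop (k + 1)) (m.get k) v * expFactor M m x v)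
    fun s hs v => by rw [Qspectator_comp Q hs, expFactor_comp k hk hs]).mono
      (Nat.le_add_left 1 _) hk
  convert hred using 2 with v
  rw [congrArg (Qm Q M · v) hm_split, hsplice (by simpa using hn),
    hsplice (by simpa [add_comm] using hn), hsplice (by simp), Qm_pair, Qm_pair, Qm_singleton]
  ring

theorem stmt_18 (M : ℕ) (hM : 1 ≤ M) (β γ : ℂ)
    (Q : (n : ℕ) → (Fin n → ℂ) → ℂ)
    (hQpoly : ∀ n : ℕ, ∃ p : MvPolynomial (Fin n) ℂ, ∀ v, Q n v = MvPolynomial.eval v p)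
    (hQ1 : ∀ v : Fin 1 → ℂ, Q 1 v = 1)
    (hbulk : ∀ n : ℕ, 2 ≤ n → PReducible β γ n 1 n (fun v =>
      (Ktilde n v + ((n : ℂ) ^ 3 - (n : ℂ)) * γ) * Q n v
        + β * ∑ n₁ ∈ Finset.Ioo 0 n,
            (Real.sqrt ((n₁ : ℝ) * ((n - n₁ : ℕ) : ℝ) * (n : ℝ)) : ℂ)
              * Q n₁ (seg n 0 n₁ v) * Q (n - n₁) (seg n n₁ (n - n₁) v)))
    (hjump : ∀ n₁ n₂ : ℕ, 1 ≤ n₁ → 1 ≤ n₂ → PReducible β γ (n₁ + n₂) 1 (n₁ + n₂) (fun v =>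
      Vseg n₁ n₂ (n₁ + n₂) v * Q n₁ (seg (n₁ + n₂) 0 n₁ v) * Q n₂ (seg (n₁ + n₂) n₁ n₂ v)
        + Vseg n₂ n₁ (n₁ + n₂) v * Q n₂ (seg (n₁ + n₂) 0 n₂ v)
            * Q n₁ (seg (n₁ + n₂) n₂ n₁ v)
        + 2 * (n₁ : ℂ) * (n₂ : ℂ) * betaC β n₁ n₂ * Q (n₁ + n₂) v)) :
    ∀ (m : List ℕ), (∀ x ∈ m, 0 < x) → m.sum = M →
    ∀ (k : Fin m.length) (n₁ n₂ : ℕ), 1 ≤ n₁ → 1 ≤ n₂ → n₁ + n₂ = m.get k →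
    ∀ x : Fin m.length → ℝ,
    PReducible β γ M 1 M (fun v =>
      (Vseg n₁ n₂ (m.get k) (seg M ((m.take k.val).sum) (m.get k) v)
          * Qm Q M (m.take k.val ++ [n₁, n₂] ++ m.drop (k.val + 1)) v
        + Vseg n₂ n₁ (m.get k) (seg M ((m.take k.val).sum) (m.get k) v)
          * Qm Q M (m.take k.val ++ [n₂, n₁] ++ m.drop (k.val + 1)) v
        + 2 * (n₁ : ℂ) * (n₂ : ℂ) * betaC β n₁ n₂ * Qm Q M m v)
      * expFactor M m x v) := by
  intro m _ hm k n₁ n₂ h₁ h₂ hn x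
  exact stmt_18_general Q hm.le k hn (hjump n₁ n₂ h₁ h₂) x
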